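/- If R is a relative m-ovoid of Q⁻(2n+1,q) with respect to 𝒬 and P = ⟨v⟩ is a point of R, then the number of points of R contained in the hyperplane v^⊥ = {w ∈ V : B(v,w) = 0} equals m(qⁿ + 1) − qⁿ. -/

import Mathlib

noncomputable section

open Module

variable {F V : Type*} [Field F] [AddCommGroup V] [Module F V]

/-- `P` is a singular point of the quadratic form `Q`, i.e. a `1`-dimensional subspace
spanned by a nonzero singular vector. -/
def IsSingularPoint (Q : QuadraticForm F V) (P : Submodule F V) : Prop :=
  ∃ v : V, v ≠ 0 ∧ Q v = 0 ∧ P = Submodule.span F {v}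

/-- A subspace is totally singular if `Q` vanishes identically on it. -/
def TotallySingular (Q : QuadraticForm F V) (W : Submodule F V) : Prop :=
  ∀ v ∈ W, Q v = 0

/-- A generator is a totally singular subspace of (vector space) dimension `n`. -/
def IsGenerator (Q : QuadraticForm F V) (n : ℕ) (g : Submodule F V) : Prop :=
  TotallySingular Q g ∧ finrank F g = n

/-- The restriction of `Q` to the subspace `U` is nondegenerate. -/
def NondegOn (Q : QuadraticForm F V) (U : Submodule F V) : Prop :=
  ∀ v ∈ U, Q v = 0 → (∀ w ∈ U, QuadraticMap.polar (⇑Q) v w = 0) → v = 0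

/-- The quadratic form `Q` is nondegenerate. -/
def Nondeg (Q : QuadraticForm F V) : Prop :=
  ∀ v : V, Q v = 0 → (∀ w : V, QuadraticMap.polar (⇑Q) v w = 0) → v = 0

/-- `Q` has Witt index `n`: every totally singular subspace has dimension at most `n`
and some totally singular subspace has dimension `n`. -/
def HasWittIndex (Q : QuadraticForm F V) (n : ℕ) : Prop :=
  (∀ W : Submodule F V, TotallySingular Q W → finrank F W ≤ n) ∧
  ∃ W : Submodule F V, TotallySingular Q W ∧ finrank F W = n

/-- A relative `m`-ovoid with respect to the parabolic section cut out by the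
hyperplane `H`: a set `R` of singular points not contained in `H` such that every
generator not contained in `H` contains exactly `m` points of `R`. -/
def IsRelativeMOvoid (Q : QuadraticForm F V) (n : ℕ) (H : Submodule F V) (m : ℕ)
    (R : Set (Submodule F V)) : Prop :=
  (∀ P ∈ R, IsSingularPoint Q P ∧ ¬ P ≤ H) ∧
  ∀ g : Submodule F V, IsGenerator Q n g → ¬ g ≤ H → {P ∈ R | P ≤ g}.ncard = m

/-- The hyperplane `v^⊥ = {w : B(v,w) = 0}`, where `B` is the polar form of `Q`. -/
def vperp (Q : QuadraticForm F V) (v : V) : Submodule F V where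
  carrier := {w | QuadraticMap.polar (⇑Q) v w = 0}
  zero_mem' := QuadraticMap.polar_zero_right Q v
  add_mem' := fun ha hb => by
    simp only [Set.mem_setOf_eq] at *
    rw [QuadraticMap.polar_add_right, ha, hb, add_zero]
  smul_mem' := fun c w hw => by
    simp only [Set.mem_setOf_eq] at *
    rw [QuadraticMap.polar_smul_right, hw, smul_zero]

/-!
Count the pairs `(P, g)` with `P ≠ ⟨v⟩` a point of `R` and `g` a generator containing both `⟨v⟩`
and `P`. A generator through `⟨v⟩` is not contained in `H`, so it contains `m - 1` such points; a
point `P ≠ ⟨v⟩` of `R` lies on such a generator only if `P ≤ v^⊥`, and then the number of these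
generators depends only on `n`, `q` and the dimension of `V`. If that dimension is `2n + e` (so
`e = 0, 1, 2` for hyperbolic, parabolic and elliptic quadrics), a totally singular subspace of
dimension `n - j` lies in `∏ i < j, (q ^ (e + i) + 1)` generators, so the generators through a point
are `q ^ (n + e - 2) + 1` times as many as those through a totally singular line.

The formula for the number of generators follows by counting, for a totally singular `W`, the pairs
`(x, g)` with `x ∈ g \ W` and `W ≤ g`. This needs the number of singular vectors of `W^⊥`, which is
found by descending from `W^⊥` to `W^⊥ ∩ x^⊥` for a singular `x`: on each line `y + F x` with
`y` not orthogonal to `x` the form `Q` is a nonconstant affine function, so it has exactly one zero.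
-/

lemma ncard_mul_eq_ncard_mul {α β : Type*} [Finite α] [Finite β] (r : α → β → Prop)
    {s : Set α} {t : Set β} {a b : ℕ} (ha : ∀ x ∈ s, {y ∈ t | r x y}.ncard = a)
    (hb : ∀ y ∈ t, {x ∈ s | r x y}.ncard = b) : s.ncard * a = t.ncard * b := by
  classical
  have := Fintype.ofFinite α
  have := Fintype.ofFinite β
  rw [Set.ncard_eq_toFinset_card', Set.ncard_eq_toFinset_card']
  refine Finset.card_mul_eq_card_mul r (fun x hx => ?_) fun y hy => ?_
  · rw [← ha x (Set.mem_toFinset.1 hx), ← Set.ncard_coe_finset]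
    simp [Finset.bipartiteAbove]
  · rw [← hb y (Set.mem_toFinset.1 hy), ← Set.ncard_coe_finset]
    simp [Finset.bipartiteBelow]

lemma ncard_coe_submodule [FiniteDimensional F V] (U : Submodule F V) :
    (U : Set V).ncard = Nat.card F ^ finrank F U :=
  natCard_eq_pow_finrank (K := F) (V := U)

section Orthogonality

variable {Q : QuadraticForm F V} {W g : Submodule F V} {x y : V}

/-- The orthogonal complement `W^⊥` of a subspace with respect to the polar form of `Q`. -/
def perp (Q : QuadraticForm F V) (W : Submodule F V) : Submodule F V :=
  LinearMap.BilinForm.orthogonal Q.polarBilin W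

lemma mem_perp : y ∈ perp Q W ↔ ∀ w ∈ W, QuadraticMap.polar Q w y = 0 := Iff.rfl

lemma mem_vperp : y ∈ vperp Q x ↔ QuadraticMap.polar Q x y = 0 := Iff.rfl

lemma perp_span_singleton (Q : QuadraticForm F V) (x : V) :
    perp Q (Submodule.span F {x}) = vperp Q x := by
  ext y
  refine ⟨fun hy => hy x (Submodule.mem_span_singleton_self x), fun hy => mem_perp.2 fun w hw => ?_⟩
  obtain ⟨t, rfl⟩ := Submodule.mem_span_singleton.1 hw
  rw [QuadraticMap.polar_smul_left, mem_vperp.1 hy, smul_zero]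

lemma perp_anti (hWg : W ≤ g) : perp Q g ≤ perp Q W := LinearMap.BilinForm.orthogonal_le hWg

lemma perp_sup (Q : QuadraticForm F V) (W U : Submodule F V) :
    perp Q (W ⊔ U) = perp Q W ⊓ perp Q U := by
  refine le_antisymm (le_inf (perp_anti le_sup_left) (perp_anti le_sup_right)) ?_
  refine fun y ⟨hyW, hyU⟩ => mem_perp.2 fun z hz => ?_
  obtain ⟨w, hw, u, hu, rfl⟩ := Submodule.mem_sup.1 hz
  rw [QuadraticMap.polar_add_left, mem_perp.1 hyW w hw, mem_perp.1 hyU u hu, add_zero]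

namespace TotallySingular

lemma mono (hg : TotallySingular Q g) (hWg : W ≤ g) : TotallySingular Q W :=
  fun x hx => hg x (hWg hx)

lemma polar_eq_zero (hW : TotallySingular Q W) (hx : x ∈ W) (hy : y ∈ W) :
    QuadraticMap.polar Q x y = 0 := by
  simp [QuadraticMap.polar, hW _ (W.add_mem hx hy), hW _ hx, hW _ hy]

lemma le_perp (hg : TotallySingular Q g) (hWg : W ≤ g) : g ≤ perp Q W :=
  fun _ hx _ hw => hg.polar_eq_zero (hWg hw) hx

lemma span_singleton (hx : Q x = 0) : TotallySingular Q (Submodule.span F {x}) := by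
  intro y hy
  obtain ⟨t, rfl⟩ := Submodule.mem_span_singleton.1 hy
  rw [QuadraticMap.map_smul, hx, smul_zero]

lemma sup (hW : TotallySingular Q W) (hg : TotallySingular Q g) (hgW : g ≤ perp Q W) :
    TotallySingular Q (W ⊔ g) := by
  intro y hy
  obtain ⟨w, hw, z, hz, rfl⟩ := Submodule.mem_sup.1 hy
  rw [QuadraticMap.map_add Q, hW w hw, hg z hz, mem_perp.1 (hgW hz) w hw, add_zero, add_zero]

lemma sup_span_singleton (hW : TotallySingular Q W) (hx : x ∈ perp Q W) (hQx : Q x = 0) :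
    TotallySingular Q (W ⊔ Submodule.span F {x}) :=
  hW.sup (span_singleton hQx) ((Submodule.span_singleton_le_iff_mem x _).2 hx)

lemma finrank_add_finrank_perp [FiniteDimensional F V] (hW : TotallySingular Q W)
    (hQ : Nondeg Q) : finrank F W + finrank F (perp Q W) = finrank F V := by
  have hker : W ⊓ LinearMap.ker Q.polarBilin = ⊥ := by
    rw [Submodule.eq_bot_iff]
    rintro x ⟨hxW, hxker⟩
    exact hQ x (hW x hxW) (LinearMap.congr_fun (LinearMap.mem_ker.1 hxker))
  rw [perp, LinearMap.BilinForm.finrank_add_finrank_orthogonal', hker, finrank_bot, add_zero]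

lemma exists_mem_perp_notMem [FiniteDimensional F V] (hQ : Nondeg Q) (hW : TotallySingular Q W)
    (hg : TotallySingular Q g) (hlt : finrank F W < finrank F g) :
    ∃ x ∈ perp Q W, Q x = 0 ∧ x ∉ W := by
  have hle : perp Q W ⊔ g ≤ perp Q (W ⊓ g) :=
    sup_le (perp_anti inf_le_left) (hg.le_perp inf_le_right)
  have hdim : finrank F (W ⊓ g : Submodule F V) < finrank F (perp Q W ⊓ g : Submodule F V) := by
    have hW_perp := hW.finrank_add_finrank_perp hQ
    have hinf_perp := (hW.mono inf_le_left : TotallySingular Q (W ⊓ g)).finrank_add_finrank_perp hQ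
    have hmodular := Submodule.finrank_sup_add_finrank_inf_eq (perp Q W) g
    have hmono := Submodule.finrank_mono hle
    omega
  obtain ⟨x, hx, hxW⟩ : ∃ x ∈ perp Q W ⊓ g, x ∉ W ⊓ g :=
    SetLike.not_le_iff_exists.1 fun h => hdim.not_ge (Submodule.finrank_mono h)
  exact ⟨x, hx.1, hg x hx.2, fun h => hxW ⟨h, hx.2⟩⟩

end TotallySingular

end Orthogonality

section SingularVectors

variable {Q : QuadraticForm F V} {U W : Submodule F V} {x : V} {n e : ℕ}

/-- The set of singular vectors of `Q` in the subspace `U`, including the zero vector. -/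
def singularVectors (Q : QuadraticForm F V) (U : Submodule F V) : Set V :=
  {y | y ∈ U ∧ Q y = 0}

lemma TotallySingular.subset_singularVectors_perp (hW : TotallySingular Q W) :
    (W : Set V) ⊆ singularVectors Q (perp Q W) :=
  fun y hy => ⟨hW.le_perp le_rfl hy, hW y hy⟩

lemma IsGenerator.singularVectors_perp [FiniteDimensional F V] (hw : HasWittIndex Q n)
    (hW : IsGenerator Q n W) :
    singularVectors Q (perp Q W) = W := by
  refine Set.Subset.antisymm (fun x ⟨hx, hQx⟩ => ?_) hW.1.subset_singularVectors_perp
  by_contra hxW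
  have hle := hw.1 _ (hW.1.sup_span_singleton hx hQx)
  rw [Submodule.finrank_sup_span_singleton hxW, hW.2] at hle
  omega

lemma polar_add_smul_self (hQx : Q x = 0) (y : V) (t : F) :
    QuadraticMap.polar Q x (y + t • x) = QuadraticMap.polar Q x y := by
  simp [QuadraticMap.polar_add_right, QuadraticMap.polar_smul_right, QuadraticMap.polar_self, hQx]

lemma map_add_smul_of_map_eq_zero (hQx : Q x = 0) (y : V) (t : F) :
    Q (y + t • x) = Q y + t * QuadraticMap.polar Q x y := by
  simp [QuadraticMap.map_add Q, QuadraticMap.map_smul, hQx, QuadraticMap.polar_smul_right,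
    QuadraticMap.polar_comm Q y x]

lemma card_mul_ncard_singularVectors_sdiff_vperp (hxU : x ∈ U) (hQx : Q x = 0) :
    Nat.card F * (singularVectors Q U \ vperp Q x).ncard = ((U : Set V) \ vperp Q x).ncard := by
  have himage : (fun p : F × V => p.2 + p.1 • x) ''
      (Set.univ ×ˢ (singularVectors Q U \ vperp Q x)) = (U : Set V) \ vperp Q x := by
    ext y
    constructor
    · rintro ⟨⟨t, z⟩, ⟨-, ⟨hzU, -⟩, hz⟩, rfl⟩
      refine ⟨U.add_mem hzU (U.smul_mem t hxU), fun h => hz ?_⟩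
      rwa [SetLike.mem_coe, mem_vperp, polar_add_smul_self hQx] at h
    · rintro ⟨hyU, hy⟩
      have hpolar : QuadraticMap.polar Q x y ≠ 0 := hy
      refine ⟨(Q y / QuadraticMap.polar Q x y, y + (-(Q y / QuadraticMap.polar Q x y)) • x),
        ⟨trivial, ⟨U.add_mem hyU (U.smul_mem _ hxU), ?_⟩, ?_⟩, by simp⟩
      · rw [map_add_smul_of_map_eq_zero hQx, neg_mul, div_mul_cancel₀ _ hpolar, add_neg_cancel]
      · rwa [SetLike.mem_coe, mem_vperp, polar_add_smul_self hQx]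
  have hinj : Set.InjOn (fun p : F × V => p.2 + p.1 • x)
      (Set.univ ×ˢ (singularVectors Q U \ vperp Q x)) := by
    rintro ⟨t, y⟩ ⟨-, ⟨-, hQy⟩, hy⟩ ⟨s, z⟩ ⟨-, ⟨-, hQz⟩, -⟩ (heq : y + t • x = z + s • x)
    have hpolar : QuadraticMap.polar Q x y = QuadraticMap.polar Q x z := by
      rw [← polar_add_smul_self hQx y t, heq, polar_add_smul_self hQx]
    have hts : t * QuadraticMap.polar Q x y = s * QuadraticMap.polar Q x y := by
      have hQ_eq := congrArg Q heq
      rwa [map_add_smul_of_map_eq_zero hQx, map_add_smul_of_map_eq_zero hQx, hQy, hQz, zero_add,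
        zero_add, ← hpolar] at hQ_eq
    obtain rfl : t = s := mul_right_cancel₀ hy hts
    rw [add_right_cancel heq]
  rw [← himage, hinj.ncard_image, Set.ncard_prod, Set.ncard_univ]

variable [Finite F] [FiniteDimensional F V]

lemma card_mul_ncard_singularVectors_add (hxU : x ∈ U) (hQx : Q x = 0) :
    Nat.card F * (singularVectors Q U).ncard
        + Nat.card F ^ finrank F (U ⊓ vperp Q x : Submodule F V)
      = Nat.card F * (singularVectors Q (U ⊓ vperp Q x)).ncard + Nat.card F ^ finrank F U := by
  have : Finite V := Module.finite_of_finite F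
  have hsingular : singularVectors Q (U ⊓ vperp Q x) = singularVectors Q U ∩ vperp Q x :=
    Set.ext fun _ => and_right_comm
  rw [← ncard_coe_submodule, ← ncard_coe_submodule, hsingular, Submodule.coe_inf,
    ← Set.ncard_inter_add_ncard_sdiff_eq_ncard (singularVectors Q U) (vperp Q x),
    ← Set.ncard_inter_add_ncard_sdiff_eq_ncard (U : Set V) (vperp Q x),
    ← card_mul_ncard_singularVectors_sdiff_vperp hxU hQx]
  ring

-- The factor `Nat.card F` avoids the exponent `n + e - 1`, which truncates when `n = e = 0`.
lemma card_mul_ncard_singularVectors_perp (hQ : Nondeg Q) (hw : HasWittIndex Q n)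
    (hV : finrank F V = 2 * n + e) (hW : TotallySingular Q W) {j : ℕ} (hj : finrank F W + j = n) :
    Nat.card F * (singularVectors Q (perp Q W)).ncard + Nat.card F ^ (n + e)
      = Nat.card F ^ (n + 1) + Nat.card F ^ (n + e + j) := by
  induction j generalizing W with
  | zero =>
    rw [IsGenerator.singularVectors_perp hw ⟨hW, hj⟩, ncard_coe_submodule, ← hj]
    ring
  | succ j ih =>
    obtain ⟨g, hg, hgn⟩ := hw.2
    obtain ⟨x, hx, hQx, hxW⟩ := hW.exists_mem_perp_notMem hQ hg (by omega)
    have hWx := hW.sup_span_singleton hx hQx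
    have hWx_finrank := Submodule.finrank_sup_span_singleton hxW
    have hW_perp := hW.finrank_add_finrank_perp hQ
    have hWx_perp := hWx.finrank_add_finrank_perp hQ
    have hdescent := card_mul_ncard_singularVectors_add hx hQx
    rw [← perp_span_singleton, ← perp_sup,
      show finrank F (perp Q W) = n + e + (j + 1) by omega,
      show finrank F (perp Q (W ⊔ Submodule.span F {x})) = n + e + j by omega] at hdescent
    have hind := ih hWx (by omega)
    omega

lemma ncard_singularVectors_perp_sdiff (hQ : Nondeg Q) (hw : HasWittIndex Q n)
    (hV : finrank F V = 2 * n + e) (hW : TotallySingular Q W) {j : ℕ}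
    (hj : finrank F W + (j + 1) = n) :
    (singularVectors Q (perp Q W) \ W).ncard
      = (Nat.card F ^ n - Nat.card F ^ finrank F W) * (Nat.card F ^ (e + j) + 1) := by
  have : Finite V := Module.finite_of_finite F
  have hpos : 0 < Nat.card F := Nat.card_pos
  have hle : Nat.card F ^ finrank F W ≤ Nat.card F ^ n := Nat.pow_le_pow_right hpos (by omega)
  have hcount := card_mul_ncard_singularVectors_perp hQ hw hV hW hj
  rw [← Set.ncard_sdiff_add_ncard_of_subset hW.subset_singularVectors_perp,
    ncard_coe_submodule] at hcount
  apply Nat.eq_of_mul_eq_mul_left hpos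
  subst hj
  zify [hle] at hcount ⊢
  linear_combination hcount

end SingularVectors

section Generators

variable {Q : QuadraticForm F V} {W P : Submodule F V} {v : V} {n e : ℕ}

/-- The set of generators containing the subspace `W`. -/
def generatorsThrough (Q : QuadraticForm F V) (n : ℕ) (W : Submodule F V) :
    Set (Submodule F V) :=
  {g | IsGenerator Q n g ∧ W ≤ g}

lemma setOf_mem_generatorsThrough_and_le (Q : QuadraticForm F V) (n : ℕ) (W U : Submodule F V) :
    {g ∈ generatorsThrough Q n W | U ≤ g} = generatorsThrough Q n (W ⊔ U) := by
  ext g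
  simp only [generatorsThrough, Set.mem_ofPred_eq, sup_le_iff, and_assoc]

variable [FiniteDimensional F V]

lemma IsGenerator.generatorsThrough_self (hW : IsGenerator Q n W) :
    generatorsThrough Q n W = {W} := by
  ext g
  constructor
  · rintro ⟨hg, hWg⟩
    exact (Submodule.eq_of_le_of_finrank_eq hWg (hW.2.trans hg.2.symm)).symm
  · rintro rfl
    exact ⟨hW, le_rfl⟩

variable [Finite F]

lemma ncard_singularVectors_perp_sdiff_inter {g : Submodule F V}
    (hg : g ∈ generatorsThrough Q n W) :
    {x ∈ singularVectors Q (perp Q W) \ W | x ∈ g}.ncard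
      = Nat.card F ^ n - Nat.card F ^ finrank F W := by
  have : Finite V := Module.finite_of_finite F
  obtain ⟨⟨hg, rfl⟩, hWg⟩ := hg
  have hsdiff : {x ∈ singularVectors Q (perp Q W) \ W | x ∈ g} = (g : Set V) \ W := by
    ext x
    exact ⟨fun hx => ⟨hx.2, hx.1.2⟩, fun hx => ⟨⟨⟨hg.le_perp hWg hx.1, hg x hx.1⟩, hx.2⟩, hx.1⟩⟩
  rw [hsdiff, Set.ncard_sdiff hWg, ncard_coe_submodule, ncard_coe_submodule]

theorem ncard_generatorsThrough (hQ : Nondeg Q) (hw : HasWittIndex Q n)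
    (hV : finrank F V = 2 * n + e) (hW : TotallySingular Q W) {j : ℕ} (hj : finrank F W + j = n) :
    (generatorsThrough Q n W).ncard = ∏ i ∈ Finset.range j, (Nat.card F ^ (e + i) + 1) := by
  induction j generalizing W with
  | zero => rw [IsGenerator.generatorsThrough_self ⟨hW, hj⟩, Set.ncard_singleton,
      Finset.prod_range_zero]
  | succ j ih =>
    have : Finite V := Module.finite_of_finite F
    have hthrough : ∀ x ∈ singularVectors Q (perp Q W) \ W,
        {g ∈ generatorsThrough Q n W | x ∈ g}.ncard
          = ∏ i ∈ Finset.range j, (Nat.card F ^ (e + i) + 1) := by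
      rintro x ⟨⟨hx, hQx⟩, hxW⟩
      simp only [← Submodule.span_singleton_le_iff_mem, setOf_mem_generatorsThrough_and_le]
      have hfinrank := Submodule.finrank_sup_span_singleton hxW
      exact ih (hW.sup_span_singleton hx hQx) (by omega)
    have hcount := ncard_mul_eq_ncard_mul (fun x g => x ∈ g) hthrough
      fun g hg => ncard_singularVectors_perp_sdiff_inter hg
    rw [ncard_singularVectors_perp_sdiff hQ hw hV hW hj] at hcount
    have hpos : 0 < Nat.card F ^ n - Nat.card F ^ finrank F W :=
      Nat.sub_pos_of_lt (Nat.pow_lt_pow_right Finite.one_lt_card (by omega))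
    apply Nat.eq_of_mul_eq_mul_right hpos
    rw [← hcount, Finset.prod_range_succ]
    ring

lemma ncard_generatorsThrough_span_singleton (hQ : Nondeg Q) (hw : HasWittIndex Q n) (hn : 2 ≤ n)
    (hV : finrank F V = 2 * n + e) (hv0 : v ≠ 0) (hvQ : Q v = 0) :
    (generatorsThrough Q n (Submodule.span F {v})).ncard
      = (∏ i ∈ Finset.range (n - 2), (Nat.card F ^ (e + i) + 1))
        * (Nat.card F ^ (n + e - 2) + 1) := by
  have hfinrank : finrank F (Submodule.span F {v}) = 1 := finrank_span_singleton hv0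
  rw [ncard_generatorsThrough hQ hw hV (.span_singleton hvQ) (j := n - 2 + 1) (by omega),
    Finset.prod_range_succ, show e + (n - 2) = n + e - 2 by omega]

lemma IsSingularPoint.ncard_generatorsThrough_sup (hP : IsSingularPoint Q P) (hQ : Nondeg Q)
    (hw : HasWittIndex Q n) (hV : finrank F V = 2 * n + e) (hv0 : v ≠ 0) (hvQ : Q v = 0)
    (hPv : P ≤ vperp Q v) (hne : P ≠ Submodule.span F {v}) :
    (generatorsThrough Q n (Submodule.span F {v} ⊔ P)).ncard
      = ∏ i ∈ Finset.range (n - 2), (Nat.card F ^ (e + i) + 1) := by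
  obtain ⟨w, hw0, hwQ, rfl⟩ := hP
  have hw_notMem : w ∉ Submodule.span F {v} := fun hmem => hne <|
    Submodule.eq_of_le_of_finrank_eq ((Submodule.span_singleton_le_iff_mem w _).2 hmem)
      (by rw [finrank_span_singleton hw0, finrank_span_singleton hv0])
  have hfinrank := Submodule.finrank_sup_span_singleton hw_notMem
  rw [finrank_span_singleton hv0] at hfinrank
  rw [← perp_span_singleton, Submodule.span_singleton_le_iff_mem] at hPv
  have hline := (TotallySingular.span_singleton hvQ).sup_span_singleton hPv hwQ
  have hline_le := hw.1 _ hline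
  exact ncard_generatorsThrough hQ hw hV hline (by omega)

end Generators

section RelativeOvoids

variable {Q : QuadraticForm F V} {n m e : ℕ} {H g : Submodule F V} {R : Set (Submodule F V)} {v : V}

/-- The points of `R` in `v^⊥` other than `⟨v⟩`. When `⟨v⟩` and the points of `R` are singular,
these are the points of `R` that span a totally singular line with `⟨v⟩`. -/
def collinearPoints (Q : QuadraticForm F V) (R : Set (Submodule F V)) (v : V) :
    Set (Submodule F V) :=
  {P ∈ R | P ≤ vperp Q v} \ {Submodule.span F {v}}

lemma ncard_collinearPoints_add_one [Finite (Submodule F V)] (hvQ : Q v = 0)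
    (hvR : Submodule.span F {v} ∈ R) :
    (collinearPoints Q R v).ncard + 1 = {P ∈ R | P ≤ vperp Q v}.ncard := by
  have hv_mem : Submodule.span F {v} ∈ {P ∈ R | P ≤ vperp Q v} :=
    ⟨hvR, perp_span_singleton Q v ▸ (TotallySingular.span_singleton hvQ).le_perp le_rfl⟩
  exact Set.ncard_sdiff_singleton_add_one hv_mem

namespace IsRelativeMOvoid

lemma ncard_collinearPoints_le_add_one [Finite (Submodule F V)] (hR : IsRelativeMOvoid Q n H m R)
    (hvR : Submodule.span F {v} ∈ R) (hg : g ∈ generatorsThrough Q n (Submodule.span F {v})) :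
    {P ∈ collinearPoints Q R v | P ≤ g}.ncard + 1 = m := by
  obtain ⟨hg, hvg⟩ := hg
  have hsdiff : {P ∈ collinearPoints Q R v | P ≤ g}
      = {P ∈ R | P ≤ g} \ {Submodule.span F {v}} := by
    have hperp : g ≤ vperp Q v := perp_span_singleton Q v ▸ hg.1.le_perp hvg
    ext P
    exact ⟨fun hP => ⟨⟨hP.1.1.1, hP.2⟩, hP.1.2⟩,
      fun hP => ⟨⟨⟨hP.1.1, hP.1.2.trans hperp⟩, hP.2⟩, hP.1.2⟩⟩
  have hv_mem : Submodule.span F {v} ∈ {P ∈ R | P ≤ g} := ⟨hvR, hvg⟩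
  rw [hsdiff, Set.ncard_sdiff_singleton_add_one hv_mem]
  exact hR.2 g hg fun hgH => (hR.1 _ hvR).2 (hvg.trans hgH)

variable [Finite F] [FiniteDimensional F V]

lemma pos (hR : IsRelativeMOvoid Q n H m R) (hQ : Nondeg Q) (hw : HasWittIndex Q n)
    (hV : finrank F V = 2 * n + e) (hvQ : Q v = 0) (hvR : Submodule.span F {v} ∈ R) : 0 < m := by
  have : Finite V := Module.finite_of_finite F
  have hspan := TotallySingular.span_singleton hvQ
  have hgenerators := ncard_generatorsThrough hQ hw hV hspan (Nat.add_sub_of_le (hw.1 _ hspan))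
  obtain ⟨g, hg⟩ := Set.nonempty_of_ncard_ne_zero (hgenerators.trans_ne (by positivity))
  exact hR.ncard_collinearPoints_le_add_one hvR hg ▸ Nat.succ_pos _

lemma ncard_collinearPoints (hR : IsRelativeMOvoid Q n H m R) (hQ : Nondeg Q)
    (hw : HasWittIndex Q n) (hn : 2 ≤ n) (hV : finrank F V = 2 * n + e) (hv0 : v ≠ 0)
    (hvQ : Q v = 0) (hvR : Submodule.span F {v} ∈ R) :
    (collinearPoints Q R v).ncard = (m - 1) * (Nat.card F ^ (n + e - 2) + 1) := by
  have : Finite V := Module.finite_of_finite F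
  have hthrough : ∀ P ∈ collinearPoints Q R v,
      {g ∈ generatorsThrough Q n (Submodule.span F {v}) | P ≤ g}.ncard
        = ∏ i ∈ Finset.range (n - 2), (Nat.card F ^ (e + i) + 1) := by
    rintro P ⟨⟨hPR, hPv⟩, hne⟩
    rw [setOf_mem_generatorsThrough_and_le]
    exact (hR.1 P hPR).1.ncard_generatorsThrough_sup hQ hw hV hv0 hvQ hPv hne
  have hcount := ncard_mul_eq_ncard_mul (fun P g => P ≤ g) hthrough fun g hg =>
    Nat.eq_sub_of_add_eq (hR.ncard_collinearPoints_le_add_one hvR hg)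
  rw [ncard_generatorsThrough_span_singleton hQ hw hn hV hv0 hvQ] at hcount
  have hprod_pos : 0 < ∏ i ∈ Finset.range (n - 2), (Nat.card F ^ (e + i) + 1) := by positivity
  apply Nat.eq_of_mul_eq_mul_right hprod_pos
  rw [hcount]
  ring

end IsRelativeMOvoid

end RelativeOvoids

theorem statement_5_general [Finite F] {n e : ℕ} (hn : 2 ≤ n) (hV : finrank F V = 2 * n + e)
    {Q : QuadraticForm F V} (hQ : Nondeg Q) (hw : HasWittIndex Q n) {H : Submodule F V} {m : ℕ}
    {R : Set (Submodule F V)} (hR : IsRelativeMOvoid Q n H m R)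
    {v : V} (hv0 : v ≠ 0) (hvQ : Q v = 0) (hvR : Submodule.span F {v} ∈ R) :
    {P ∈ R | P ≤ vperp Q v}.ncard
      = m * (Nat.card F ^ (n + e - 2) + 1) - Nat.card F ^ (n + e - 2) := by
  have : FiniteDimensional F V := Module.finite_of_finrank_pos (by omega)
  have : Finite V := Module.finite_of_finite F
  obtain ⟨k, rfl⟩ := Nat.exists_eq_add_one.2 (hR.pos hQ hw hV hvQ hvR)
  rw [← ncard_collinearPoints_add_one hvQ hvR,
    hR.ncard_collinearPoints hQ hw hn hV hv0 hvQ hvR, Nat.add_sub_cancel]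
  apply Nat.eq_sub_of_add_eq
  ring

/-- If `P = ⟨v⟩` is a point of a relative `m`-ovoid `R`, then `v^⊥` contains exactly
`m(qⁿ + 1) − qⁿ` points of `R`. -/
theorem statement_5
    (q n : ℕ) [Fintype F] (hq : Fintype.card F = q) (hn : 2 ≤ n)
    (hV : finrank F V = 2 * n + 2)
    (Q : QuadraticForm F V) (hQnd : Nondeg Q) (hQw : HasWittIndex Q n)
    (H : Submodule F V) (hH : finrank F H = 2 * n + 1) (hHnd : NondegOn Q H)
    (m : ℕ) (R : Set (Submodule F V)) (hR : IsRelativeMOvoid Q n H m R)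
    (v : V) (hv0 : v ≠ 0) (hvQ : Q v = 0) (hvR : Submodule.span F {v} ∈ R) :
    {P ∈ R | P ≤ vperp Q v}.ncard = m * (q ^ n + 1) - q ^ n := by
  subst hq
  rw [← Nat.card_eq_fintype_card]
  exact statement_5_general hn hV hQnd hQw hR hv0 hvQ hvR
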